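/- The series ∑_{n=0}^∞ ((1/2)_n (1/4)_n^3 (3/4)_n^3 / ((4/3)_n (5/3)_n (1)_n^5)) · (-16/27)^n · (1376n⁴ + 1808n³ + 784n² + 138n + 9) converges and equals 64/π². -/

import Mathlib

noncomputable def poch (x : ℝ) (n : ℕ) : ℝ := ∏ i ∈ Finset.range n, (x + i)

/-!
Let `t n` be the coefficient of the polynomial `p n` in the `n`-th term of the series. The series
comes from a Wilf–Zeilberger pair `(F, G)`, that is, `F (n + 1) k - F n k = G n (k + 1) - G n k`,
with `G n 0 = t n * p n / 64` and `F 0 k = 0`. Summing over `k` gives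
`∑' k, F (n + 1) k - ∑' k, F n k = lim_k G n k - G n 0`, and summing this over `n` telescopes.
Since `∑' k, F n k → 0`, we get `∑' n, G n 0 = ∑' n, lim_k G n k`, where only `n = 0` contributes
on the right: by Wallis' product `G 0 k → 1 / π ^ 2`.
-/

open Filter Topology Finset

section WZPair

variable {E : Type*} [AddCommGroup E]

/-- `F` and `G` form a Wilf–Zeilberger pair: the difference of `F` in its first variable is the
difference of `G` in its second, so that summing either variable telescopes. -/
def IsWZPair (F G : ℕ → ℕ → E) : Prop :=
  ∀ n k, F (n + 1) k - F n k = G n (k + 1) - G n k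

variable [TopologicalSpace E] [IsTopologicalAddGroup E] [T2Space E] {F G : ℕ → ℕ → E}

theorem IsWZPair.tsum_succ_sub_tsum (hFG : IsWZPair F G) (hF : ∀ n, Summable (F n)) {n : ℕ} {l : E}
    (hG : Tendsto (G n) atTop (𝓝 l)) :
    ∑' k, F (n + 1) k - ∑' k, F n k = l - G n 0 := by
  have hsum : HasSum (fun k ↦ G n (k + 1) - G n k) (∑' k, F (n + 1) k - ∑' k, F n k) := by
    simpa only [hFG n _] using (hF (n + 1)).hasSum.sub (hF n).hasSum
  refine tendsto_nhds_unique hsum.tendsto_sum_nat ?_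
  simpa only [sum_range_sub] using hG.sub_const (G n 0)

theorem IsWZPair.hasSum (hFG : IsWZPair F G) (hF : ∀ n, Summable (F n)) {l : ℕ → E} {a b : E}
    (hG : ∀ n, Tendsto (G n) atTop (𝓝 (l n))) (hl : HasSum l a)
    (hF_lim : Tendsto (fun n ↦ ∑' k, F n k) atTop (𝓝 b)) (hG_zero : Summable fun n ↦ G n 0) :
    HasSum (fun n ↦ G n 0) (a - (b - ∑' k, F 0 k)) := by
  have hterm (n : ℕ) : l n - (∑' k, F (n + 1) k - ∑' k, F n k) = G n 0 := by
    rw [hFG.tsum_succ_sub_tsum hF (hG n), sub_sub_cancel]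
  rw [hG_zero.hasSum_iff_tendsto_nat]
  simpa only [← hterm, sum_sub_distrib, sum_range_sub (fun n ↦ ∑' k, F n k)] using
    hl.tendsto_sum_nat.sub (hF_lim.sub_const _)

end WZPair

section Poch

variable {x y : ℝ}

theorem poch_zero (x : ℝ) : poch x 0 = 1 := prod_range_zero _

theorem poch_succ (x : ℝ) (n : ℕ) : poch x (n + 1) = poch x n * (x + n) :=
  prod_range_succ _ n

theorem poch_succ_left (x : ℝ) (n : ℕ) : poch x (n + 1) = x * poch (x + 1) n := by
  simp only [poch, prod_range_succ', Nat.cast_add, Nat.cast_one, Nat.cast_zero, add_zero,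
    add_right_comm x 1, add_assoc, mul_comm x]

theorem poch_add_one (hx : x ≠ 0) (n : ℕ) : poch (x + 1) n = poch x n * (x + n) / x := by
  rw [← poch_succ, poch_succ_left, mul_div_cancel_left₀ _ hx]

theorem poch_pos (hx : 0 < x) (n : ℕ) : 0 < poch x n :=
  prod_pos fun i _ ↦ by positivity

theorem abs_poch_le_poch (h : |x| ≤ y) (n : ℕ) : |poch x n| ≤ poch y n := by
  rw [poch, abs_prod]
  refine prod_le_prod (fun i _ ↦ abs_nonneg _) fun i _ ↦ ?_
  calc |x + i| ≤ |x| + |(i : ℝ)| := abs_add_le _ _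
    _ ≤ y + i := by rw [Nat.abs_cast]; gcongr

theorem poch_le_poch (hx : 0 ≤ x) (hxy : x ≤ y) (n : ℕ) : poch x n ≤ poch y n :=
  (le_abs_self _).trans (abs_poch_le_poch (by rwa [abs_of_nonneg hx]) n)

theorem poch_mul_add_one_le_poch (hx₀ : 0 ≤ x) (hx₁ : x ≤ 1) (hy : 2 ≤ y) (n : ℕ) :
    poch x n * (n + 1) ≤ poch y n :=
  calc poch x n * (n + 1) ≤ poch 1 n * (n + 1) := by gcongr; exact poch_le_poch hx₀ hx₁ n
    _ = poch (1 + 1) n := by rw [poch_add_one one_ne_zero, div_one, add_comm (n : ℝ)]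
    _ ≤ poch y n := poch_le_poch (by norm_num) (by linarith) n

theorem inv_wallis_W_eq_sq_poch_half_div_poch_one_mul (k : ℕ) :
    (Real.Wallis.W k)⁻¹ = (poch (1 / 2) k / poch 1 k) ^ 2 * (2 * k + 1) := by
  induction k with
  | zero => simp [poch, Real.Wallis.W]
  | succ k ih =>
    have h_one := (poch_pos one_pos k).ne'
    rw [Real.Wallis.W_succ, mul_inv, ih, poch_succ, poch_succ]
    push_cast
    field_simp
    ring

theorem tendsto_sq_poch_half_div_poch_one_mul :
    Tendsto (fun k : ℕ ↦ (poch (1 / 2) k / poch 1 k) ^ 2 * k) atTop (𝓝 (1 / Real.pi)) := by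
  have hwallis := Real.Wallis.tendsto_W_nhds_pi_div_two.inv₀ (by positivity)
  have hratio : Tendsto (fun k : ℕ ↦ (k : ℝ) / (2 * k + 1)) atTop (𝓝 (1 / 2)) := by
    have hlim := (tendsto_natCast_div_add_atTop (1 / 2 : ℝ)).div_const 2
    refine hlim.congr fun k ↦ ?_
    field_simp
  have hprod := hwallis.mul hratio
  rw [show (Real.pi / 2)⁻¹ * (1 / 2) = 1 / Real.pi by field_simp] at hprod
  refine hprod.congr fun k ↦ ?_
  rw [inv_wallis_W_eq_sq_poch_half_div_poch_one_mul]
  field_simp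

end Poch

theorem natCast_sub_natCast_add_half_ne_zero (k n : ℕ) : (k : ℝ) - (n + 1 / 2) ≠ 0 := by
  intro h
  have hparity : 2 * k = 2 * n + 1 := by
    exact_mod_cast (by linarith : 2 * (k : ℝ) = 2 * n + 1)
  omega

theorem tendsto_quartic_div_mul_sq (a b c d e p q : ℝ) :
    Tendsto (fun k : ℕ ↦ (a + b * k + c * k ^ 2 + d * k ^ 3 + e * k ^ 4) /
      ((p + k) * (k - q) * (k : ℝ) ^ 2)) atTop (𝓝 e) := by
  have hcont : ContinuousAt (fun x : ℝ ↦
      (a * x ^ 4 + b * x ^ 3 + c * x ^ 2 + d * x + e) / ((p * x + 1) * (1 - q * x))) 0 :=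
    ContinuousAt.div (by fun_prop) (by fun_prop) (by norm_num)
  have hlim := hcont.tendsto.comp (tendsto_inv_atTop_nhds_zero_nat (𝕜 := ℝ))
  rw [show (a * 0 ^ 4 + b * 0 ^ 3 + c * 0 ^ 2 + d * 0 + e) / ((p * 0 + 1) * (1 - q * 0)) = e by
    norm_num] at hlim
  refine hlim.congr' ?_
  filter_upwards [eventually_ne_atTop 0] with k hk
  have hk : (k : ℝ) ≠ 0 := Nat.cast_ne_zero.2 hk
  simp only [Function.comp]
  rw [← mul_div_mul_right _ _ (pow_ne_zero 4 hk)]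
  congr 1 <;> field_simp

/-- The hypergeometric factor of the `n`-th term of the series. -/
noncomputable def seriesCoeff (n : ℕ) : ℝ :=
  poch (1 / 2) n * poch (1 / 4) n ^ 3 * poch (3 / 4) n ^ 3 /
    (poch (4 / 3) n * poch (5 / 3) n * poch 1 n ^ 5) * (-16 / 27 : ℝ) ^ n

/-- The polynomial factor of the `n`-th term of the series. -/
noncomputable def seriesPoly (n : ℝ) : ℝ :=
  1376 * n ^ 4 + 1808 * n ^ 3 + 784 * n ^ 2 + 138 * n + 9

theorem seriesPoly_pos {x : ℝ} (hx : 0 ≤ x) : 0 < seriesPoly x := by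
  unfold seriesPoly
  positivity

theorem seriesCoeff_succ (n : ℕ) :
    seriesCoeff (n + 1) = seriesCoeff n *
      (-(16 / 27) * ((n + 1 / 2) * (n + 1 / 4) ^ 3 * (n + 3 / 4) ^ 3) /
        ((n + 4 / 3) * (n + 5 / 3) * (n + 1) ^ 5)) := by
  have h_one := (poch_pos one_pos n).ne'
  have h_four_thirds := (poch_pos (x := 4 / 3) (by norm_num) n).ne'
  have h_five_thirds := (poch_pos (x := 5 / 3) (by norm_num) n).ne'
  simp only [seriesCoeff, poch_succ, pow_succ (-16 / 27 : ℝ) n, add_comm _ (n : ℝ)]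
  field_simp

theorem abs_seriesCoeff_le (n : ℕ) : |seriesCoeff n| ≤ (16 / 27) ^ n := by
  have h_one := poch_pos one_pos n
  have h_half := poch_pos one_half_pos n
  have h_quarter := poch_pos (x := 1 / 4) (by norm_num) n
  have h_three_quarters := poch_pos (x := 3 / 4) (by norm_num) n
  have h_four_thirds := poch_pos (x := 4 / 3) (by norm_num) n
  have h_five_thirds := poch_pos (x := 5 / 3) (by norm_num) n
  have hnum : poch (1 / 2) n * poch (1 / 4) n ^ 3 * poch (3 / 4) n ^ 3 ≤
      poch (4 / 3) n * poch (5 / 3) n * poch 1 n ^ 5 :=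
    calc poch (1 / 2) n * poch (1 / 4) n ^ 3 * poch (3 / 4) n ^ 3
        = poch (3 / 4) n * poch (3 / 4) n *
            (poch (3 / 4) n * poch (1 / 2) n * poch (1 / 4) n ^ 3) := by
          ring
      _ ≤ poch (4 / 3) n * poch (5 / 3) n * (poch 1 n * poch 1 n * poch 1 n ^ 3) := by
          gcongr <;> exact poch_le_poch (by norm_num) (by norm_num) n
      _ = poch (4 / 3) n * poch (5 / 3) n * poch 1 n ^ 5 := by ring
  rw [seriesCoeff, abs_mul, abs_pow, abs_of_pos (by positivity),
    abs_of_neg (by norm_num : -16 / 27 < (0 : ℝ)), neg_div, neg_neg]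
  exact mul_le_of_le_one_left (by positivity) (div_le_one_of_le₀ hnum (by positivity))

theorem summable_seriesCoeff_mul_seriesPoly :
    Summable fun n : ℕ ↦ seriesCoeff n * seriesPoly n := by
  have hgeom (j : ℕ) : Summable fun n : ℕ ↦ (n : ℝ) ^ j * (16 / 27 : ℝ) ^ n :=
    summable_pow_mul_geometric_of_norm_lt_one j (by norm_num)
  have hmajorant : Summable fun n : ℕ ↦ (16 / 27 : ℝ) ^ n * seriesPoly n := by
    refine (((((hgeom 4).mul_left 1376).add ((hgeom 3).mul_left 1808)).add
      ((hgeom 2).mul_left 784)).add (((hgeom 1).mul_left 138).add ((hgeom 0).mul_left 9))).congr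
      fun n ↦ ?_
    rw [seriesPoly]
    ring
  refine hmajorant.of_norm_bounded fun n ↦ ?_
  rw [Real.norm_eq_abs, abs_mul, abs_of_pos (seriesPoly_pos n.cast_nonneg)]
  exact mul_le_mul_of_nonneg_right (abs_seriesCoeff_le n) (seriesPoly_pos n.cast_nonneg).le

/-- The hypergeometric part common to both members of the Wilf–Zeilberger pair. -/
noncomputable def wzKernel (n k : ℕ) : ℝ :=
  seriesCoeff n / 2 * poch (1 / 2) k ^ 3 * poch (1 / 2 - n) k /
    (poch (n + 1) k ^ 3 * poch (2 * n + 1) k)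

theorem wzKernel_succ_right (n k : ℕ) :
    wzKernel n (k + 1) = wzKernel n k *
      (((k : ℝ) + 1 / 2) ^ 3 * (k + 1 / 2 - n) / ((n + k + 1) ^ 3 * (2 * n + k + 1))) := by
  have h_den₁ := (poch_pos (x := (n : ℝ) + 1) (by positivity) k).ne'
  have h_den₂ := (poch_pos (x := 2 * (n : ℝ) + 1) (by positivity) k).ne'
  simp only [wzKernel, poch_succ, add_right_comm _ (1 : ℝ) (k : ℝ)]
  field_simp
  ring

theorem mul_wzKernel_succ_left (n k : ℕ) :
    3 * (n + 1) * (3 * n + 4) * (3 * n + 5) * wzKernel (n + 1) k = wzKernel n k *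
      ((n + 1 / 2) ^ 3 * ((2 * n + 1 / 2) * (2 * n + 3 / 2)) ^ 3) /
        ((n + k + 1) ^ 3 * ((2 * n + k + 1) * (2 * n + k + 2)) * (k - (n + 1 / 2))) := by
  have h_den₁ := (poch_pos (x := (n : ℝ) + 1) (by positivity) k).ne'
  have h_den₂ := (poch_pos (x := 2 * (n : ℝ) + 1) (by positivity) k).ne'
  have hk := natCast_sub_natCast_add_half_ne_zero k n
  have hn_one : poch ((n : ℝ) + 1 + 1) k = poch (n + 1) k * (n + k + 1) / (n + 1) := by
    rw [poch_add_one (by positivity), add_right_comm]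
  have htwo_n : poch (2 * ((n : ℝ) + 1) + 1) k =
      poch (2 * n + 1) k * (2 * n + k + 1) * (2 * n + k + 2) / ((2 * n + 1) * (2 * n + 2)) := by
    rw [show 2 * ((n : ℝ) + 1) + 1 = 2 * n + 1 + 1 + 1 by ring, poch_add_one (by positivity),
      poch_add_one (by positivity)]
    field_simp
    ring
  have hhalf : poch (1 / 2 - ((n : ℝ) + 1)) k =
      poch (1 / 2 - n) k * -(n + 1 / 2) / (k - (n + 1 / 2)) := by
    rw [eq_div_iff hk, show 1 / 2 - ((n : ℝ) + 1) = -(n + 1 / 2) by ring,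
      show 1 / 2 - (n : ℝ) = -(n + 1 / 2) + 1 by ring, mul_comm (poch (_ + 1) k),
      ← poch_succ_left, poch_succ, neg_add_eq_sub]
  simp only [wzKernel, seriesCoeff_succ, Nat.cast_add, Nat.cast_one, hn_one, htwo_n, hhalf]
  field_simp
  ring

theorem abs_wzKernel_le {n : ℕ} (hn : n ≠ 0) (k : ℕ) :
    |wzKernel n k| ≤ |seriesCoeff n| / (k + 1) ^ 3 := by
  have hn_ge : (1 : ℝ) ≤ n := by exact_mod_cast Nat.one_le_iff_ne_zero.2 hn
  have h_half := poch_pos one_half_pos k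
  have h_den₁ := poch_pos (x := (n : ℝ) + 1) (by positivity) k
  have h_den₂ := poch_pos (x := 2 * (n : ℝ) + 1) (by positivity) k
  have h_cube : poch (1 / 2) k * (k + 1) ≤ poch (n + 1) k :=
    poch_mul_add_one_le_poch (by norm_num) (by norm_num) (by linarith) k
  have h_abs : |poch (1 / 2 - n) k| ≤ poch (2 * n + 1) k :=
    abs_poch_le_poch (abs_le.2 ⟨by linarith, by linarith⟩) k
  rw [wzKernel, abs_div, abs_mul, abs_mul, abs_div, abs_two, abs_of_pos (pow_pos h_half 3),
    abs_of_pos (mul_pos (pow_pos h_den₁ 3) h_den₂), div_le_div_iff₀ (by positivity) (by positivity)]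
  calc |seriesCoeff n| / 2 * poch (1 / 2) k ^ 3 * |poch (1 / 2 - n) k| * (k + 1) ^ 3
      = |seriesCoeff n| / 2 * ((poch (1 / 2) k * (k + 1)) ^ 3 * |poch (1 / 2 - n) k|) := by ring
    _ ≤ |seriesCoeff n| * (poch (n + 1) k ^ 3 * poch (2 * n + 1) k) := by
      gcongr
      exact half_le_self (abs_nonneg _)

theorem wzKernel_zero_left (k : ℕ) :
    wzKernel 0 k = ((poch (1 / 2) k / poch 1 k) ^ 2) ^ 2 / 2 := by
  have h_one := (poch_pos one_pos k).ne'
  simp only [wzKernel, seriesCoeff, poch_zero, Nat.cast_zero, sub_zero, mul_zero, zero_add]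
  field_simp

theorem tendsto_wzKernel_zero_mul_sq :
    Tendsto (fun k : ℕ ↦ wzKernel 0 k * (k : ℝ) ^ 2) atTop (𝓝 (1 / (2 * Real.pi ^ 2))) := by
  have hsq := (tendsto_sq_poch_half_div_poch_one_mul.pow 2).div_const 2
  rw [show (1 / Real.pi) ^ 2 / 2 = 1 / (2 * Real.pi ^ 2) by field_simp] at hsq
  refine hsq.congr fun k ↦ ?_
  rw [wzKernel_zero_left]
  ring

theorem tendsto_wzKernel_mul_sq_of_ne_zero {n : ℕ} (hn : n ≠ 0) :
    Tendsto (fun k : ℕ ↦ wzKernel n k * (k : ℝ) ^ 2) atTop (𝓝 0) := by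
  have hmajorant := (tendsto_one_div_add_atTop_nhds_zero_nat (𝕜 := ℝ)).const_mul |seriesCoeff n|
  rw [mul_zero] at hmajorant
  refine squeeze_zero_norm (fun k ↦ ?_) hmajorant
  rw [Real.norm_eq_abs, abs_mul, abs_of_nonneg (sq_nonneg (k : ℝ))]
  calc |wzKernel n k| * (k : ℝ) ^ 2 ≤ |seriesCoeff n| / (k + 1) ^ 3 * (k + 1) ^ 2 := by
        gcongr
        · exact abs_wzKernel_le hn k
        · linarith
    _ = |seriesCoeff n| * (1 / (k + 1)) := by field_simp

/-- The first member of the Wilf–Zeilberger pair. As a series in `k` it is very-well-poised, with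
base parameter `n + 1 / 2`. -/
noncomputable def wzF (n k : ℕ) : ℝ :=
  3 * n * (3 * n + 1) * (3 * n + 2) * (1 / 2 + n + 2 * k) * wzKernel n k

/-- The numerator of the rational certificate `wzG n k / wzKernel n k`, taken at real arguments so
that its recurrence is a polynomial identity. -/
noncomputable def wzCertNum (n k : ℝ) : ℝ :=
  -(1 / 64) * (2 * n + 1) ^ 2 * seriesPoly n
  + (-3 / 8 - 97 / 16 * n - 129 / 4 * n ^ 2 - 76 * n ^ 3 - 82 * n ^ 4 - 33 * n ^ 5) * k
  + (-1 / 4 + 21 / 8 * n + 57 / 2 * n ^ 2 + 74 * n ^ 3 + 57 * n ^ 4) * k ^ 2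
  + (2 + 19 * n + 54 * n ^ 2 + 45 * n ^ 3) * k ^ 3
  + (2 + 9 * n + 9 * n ^ 2) * k ^ 4

/-- The second member of the Wilf–Zeilberger pair, whose values at `k = 0` are the terms of the
series up to the factor `64`. -/
noncomputable def wzG (n k : ℕ) : ℝ :=
  wzKernel n k * (wzCertNum n k / ((2 * n + 1 + k) * (k - (n + 1 / 2))))

-- The Wilf–Zeilberger equation divided by `wzKernel n k` and cleared of denominators.
theorem wzCertNum_recurrence (n k : ℝ) :
    (n + 1 / 2) ^ 3 * ((2 * n + 1 / 2) * (2 * n + 3 / 2)) ^ 3 * (3 / 2 + n + 2 * k)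
      - 3 * n * (3 * n + 1) * (3 * n + 2) * (1 / 2 + n + 2 * k) *
        ((n + k + 1) ^ 3 * ((2 * n + k + 1) * (2 * n + k + 2)) * (k - (n + 1 / 2)))
    = (k + 1 / 2) ^ 3 * (k - (n + 1 / 2)) * wzCertNum n (k + 1)
      - (n + k + 1) ^ 3 * (2 * n + k + 2) * wzCertNum n k := by
  unfold wzCertNum seriesPoly
  ring

theorem isWZPair_wzF_wzG : IsWZPair wzF wzG := by
  intro n k
  have hk := natCast_sub_natCast_add_half_ne_zero k n
  have hk_succ : (k : ℝ) + 1 / 2 - n ≠ 0 := by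
    convert natCast_sub_natCast_add_half_ne_zero (k + 1) n using 1
    push_cast
    ring
  have hF : wzF (n + 1) k = wzKernel n k *
      ((n + 1 / 2) ^ 3 * ((2 * n + 1 / 2) * (2 * n + 3 / 2)) ^ 3 * (3 / 2 + n + 2 * k)) /
        ((n + k + 1) ^ 3 * ((2 * n + k + 1) * (2 * n + k + 2)) * (k - (n + 1 / 2))) := by
    rw [wzF]
    push_cast
    linear_combination (3 / 2 + n + 2 * k : ℝ) * mul_wzKernel_succ_left n k
  have hG_succ : wzG n (k + 1) = wzKernel n k *
      ((k + 1 / 2) ^ 3 * (k - (n + 1 / 2)) * wzCertNum n (k + 1)) /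
        ((n + k + 1) ^ 3 * ((2 * n + k + 1) * (2 * n + k + 2)) * (k - (n + 1 / 2))) := by
    rw [wzG, wzKernel_succ_right]
    push_cast
    rw [show (2 * n + 1 + (k + 1) : ℝ) = 2 * n + k + 2 by ring,
      show (k + 1 - (n + 1 / 2) : ℝ) = k + 1 / 2 - n by ring]
    generalize (k : ℝ) - (n + 1 / 2) = d at hk ⊢
    generalize (k : ℝ) + 1 / 2 - n = d' at hk_succ ⊢
    field_simp
  have hG : wzG n k = wzKernel n k *
      ((n + k + 1) ^ 3 * (2 * n + k + 2) * wzCertNum n k) /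
        ((n + k + 1) ^ 3 * ((2 * n + k + 1) * (2 * n + k + 2)) * (k - (n + 1 / 2))) := by
    rw [wzG, add_right_comm _ 1 (k : ℝ)]
    field_simp
  rw [hF, hG_succ, hG, ← sub_div, ← mul_sub, ← wzCertNum_recurrence, wzF]
  generalize (k : ℝ) - (n + 1 / 2) = d at hk ⊢
  field_simp

theorem mul_wzG_zero_right (n : ℕ) : 64 * wzG n 0 = seriesCoeff n * seriesPoly n := by
  simp only [wzG, wzKernel, wzCertNum, poch_zero, Nat.cast_zero, add_zero, zero_sub]
  field_simp
  ring

theorem tendsto_wzG (n : ℕ) :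
    Tendsto (wzG n) atTop (𝓝 ((Pi.single 0 (1 / Real.pi ^ 2) : ℕ → ℝ) n)) := by
  have hcert : Tendsto
      (fun k : ℕ ↦ wzCertNum n k / ((2 * n + 1 + k) * (k - (n + 1 / 2)) * (k : ℝ) ^ 2)) atTop
      (𝓝 (2 + 9 * n + 9 * n ^ 2 : ℝ)) := by
    unfold wzCertNum
    exact tendsto_quartic_div_mul_sq _ _ _ _ _ _ _
  have hfactor {l : ℝ} (hker : Tendsto (fun k : ℕ ↦ wzKernel n k * (k : ℝ) ^ 2) atTop (𝓝 l)) :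
      Tendsto (wzG n) atTop (𝓝 (l * (2 + 9 * n + 9 * n ^ 2))) := by
    refine (hker.mul hcert).congr' ?_
    filter_upwards [eventually_ne_atTop 0] with k hk
    have hk : (k : ℝ) ^ 2 ≠ 0 := pow_ne_zero 2 (Nat.cast_ne_zero.2 hk)
    rw [wzG, mul_assoc, mul_comm _ ((k : ℝ) ^ 2), ← mul_div_assoc, mul_div_mul_left _ _ hk]
  rcases eq_or_ne n 0 with rfl | hn
  · convert hfactor tendsto_wzKernel_zero_mul_sq using 2
    rw [Pi.single_eq_same, Nat.cast_zero]
    field_simp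
    norm_num
  · simpa only [Pi.single_eq_of_ne hn, zero_mul] using
      hfactor (tendsto_wzKernel_mul_sq_of_ne_zero hn)

theorem wzF_zero_left (k : ℕ) : wzF 0 k = 0 := by simp [wzF]

theorem abs_wzF_le (n k : ℕ) :
    |wzF n k| ≤ |seriesCoeff n * seriesPoly n| * (1 / ((k : ℝ) + 1) ^ 2) := by
  rcases eq_or_ne n 0 with rfl | hn
  · rw [wzF_zero_left, abs_zero]
    positivity
  have hpoly : 3 * (n : ℝ) * (3 * n + 1) * (3 * n + 2) * (1 / 2 + n + 2 * k) ≤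
      seriesPoly n * (k + 1) := by
    rw [seriesPoly, ← sub_nonneg]
    ring_nf
    positivity
  have hpos := seriesPoly_pos n.cast_nonneg
  rw [wzF, abs_mul, abs_mul (seriesCoeff n), abs_of_pos hpos, abs_of_nonneg (by positivity)]
  calc _ ≤ seriesPoly n * (k + 1) * (|seriesCoeff n| / (k + 1) ^ 3) := by
        gcongr
        exact abs_wzKernel_le hn k
    _ = |seriesCoeff n| * seriesPoly n * (1 / ((k : ℝ) + 1) ^ 2) := by field_simp

theorem summable_one_div_natCast_add_one_sq : Summable fun k : ℕ ↦ 1 / ((k : ℝ) + 1) ^ 2 := by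
  exact_mod_cast (summable_nat_add_iff 1).2 (Real.summable_one_div_nat_pow.2 one_lt_two)

theorem summable_wzF (n : ℕ) : Summable (wzF n) :=
  (summable_one_div_natCast_add_one_sq.mul_left _).of_norm_bounded (abs_wzF_le n)

theorem tendsto_tsum_wzF : Tendsto (fun n ↦ ∑' k, wzF n k) atTop (𝓝 0) := by
  have hmajorant := summable_seriesCoeff_mul_seriesPoly.tendsto_atTop_zero.abs.mul_const
    (∑' k : ℕ, 1 / ((k : ℝ) + 1) ^ 2)
  rw [abs_zero, zero_mul] at hmajorant
  refine squeeze_zero_norm (fun n ↦ ?_) hmajorant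
  rw [← tsum_mul_left]
  exact tsum_of_norm_bounded (summable_one_div_natCast_add_one_sq.mul_left _).hasSum (abs_wzF_le n)

theorem stmt1 :
    HasSum (fun n : ℕ =>
      poch (1/2) n * poch (1/4) n ^ 3 * poch (3/4) n ^ 3 /
        (poch (4/3) n * poch (5/3) n * poch 1 n ^ 5) *
        (-16/27 : ℝ) ^ n *
        (1376 * (n : ℝ) ^ 4 + 1808 * n ^ 3 + 784 * n ^ 2 + 138 * n + 9))
      (64 / Real.pi ^ 2) := by
  change HasSum (fun n : ℕ ↦ seriesCoeff n * seriesPoly n) (64 / Real.pi ^ 2)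
  have hsummable : Summable fun n ↦ wzG n 0 := by
    rw [← summable_mul_left_iff (by norm_num : (64 : ℝ) ≠ 0)]
    simpa only [mul_wzG_zero_right] using summable_seriesCoeff_mul_seriesPoly
  have hsum : HasSum (fun n ↦ wzG n 0) (1 / Real.pi ^ 2) := by
    simpa only [wzF_zero_left, tsum_zero, sub_zero] using isWZPair_wzF_wzG.hasSum summable_wzF
      tendsto_wzG (hasSum_pi_single 0 _) tendsto_tsum_wzF hsummable
  simpa only [mul_wzG_zero_right, mul_one_div] using hsum.mul_left 64
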